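/- Let η ∈ X, let k ≥ 1, and let A ⊆ ℤ. Then there exists a k-soliton γ ∈ Γ_k η with tail T(γ) = A if and only if there exists a k-soliton γ¹ ∈ Γ_k(Tη) with head H(γ¹) = A. In particular, the box-ball dynamics neither creates nor destroys solitons, and the tail of each k-soliton of η becomes the head of a k-soliton of Tη. -/

import Mathlib

open MeasureTheory Filter Finset

/-- A ball configuration: a box at each integer, occupied (`true`) or empty (`false`). -/
abbrev Cfg := ℤ → Bool

/-- Numerical (integer) value of a box. -/
def valZ (b : Bool) : ℤ := if b then 1 else 0

/-- Numerical (real) value of a box. -/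
def valR (b : Bool) : ℝ := if b then 1 else 0

/-- `x` is a record of the configuration `η`:
for every `z ≤ x`, the number of balls in `[z,x]` is strictly smaller than the
number of empty boxes in `[z,x]`. -/
def isRecord (η : Cfg) (x : ℤ) : Prop :=
  ∀ z ≤ x, (∑ y ∈ Finset.Icc z x, valZ (η y)) < ∑ y ∈ Finset.Icc z x, (1 - valZ (η y))

open Classical in
/-- The box-ball (Takahashi–Satsuma) operator `T`. -/
noncomputable def bbsT (η : Cfg) : Cfg := fun x => if isRecord η x then false else !(η x)

/-- `η` has asymptotic density `lam` of balls on both half lines. -/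
def inXlam (lam : ℝ) (η : Cfg) : Prop :=
  Tendsto (fun y : ℕ => (∑ x ∈ Finset.Icc (-(y : ℤ)) 0, valR (η x)) / (y : ℝ))
    atTop (nhds lam) ∧
  Tendsto (fun y : ℕ => (∑ x ∈ Finset.Icc (0 : ℤ) (y : ℤ), valR (η x)) / (y : ℝ))
    atTop (nhds lam)

/-- `η ∈ 𝒳`: it has a well-defined density `0 < lam < 1/2`. -/
def inX (η : Cfg) : Prop := ∃ lam : ℝ, 0 < lam ∧ lam < 1 / 2 ∧ inXlam lam η

/-- `ξ` is a walk lift of the configuration `η`. -/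
def IsLift (η : Cfg) (ξ : ℤ → ℤ) : Prop :=
  ∀ x : ℤ, ξ x - ξ (x - 1) = 2 * valZ (η x) - 1

/-- Running minimum `min_{y ≤ x} ξ(y)` of a walk. -/
noncomputable def runMin (ξ : ℤ → ℤ) (x : ℤ) : ℤ := sInf (ξ '' Set.Iic x)

/-- The box-ball operator on walks: reflection at the running minimum. -/
noncomputable def liftT (ξ : ℤ → ℤ) : ℤ → ℤ := fun x => 2 * runMin ξ x - ξ x

/-- The canonical walk lift of `η` with value `0` at the origin. -/
noncomputable def xi0 (η : Cfg) : ℤ → ℤ := fun x =>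
  if 0 ≤ x then ∑ y ∈ Finset.Icc 1 x, (2 * valZ (η y) - 1)
  else -∑ y ∈ Finset.Icc (x + 1) 0, (2 * valZ (η y) - 1)
/-- Maximal runs of a word of (position, letter) pairs. -/
def runsOf : List (ℤ × Bool) → List (List (ℤ × Bool))
  | [] => []
  | a :: l =>
    match runsOf l with
    | [] => [[a]]
    | r :: rs =>
      if (r.head?.map Prod.snd) = some a.2 then (a :: r) :: rs else [a] :: r :: rs

/-- Takahashi–Satsuma step: find the leftmost run whose length is at least the
length of the run preceding it; the soliton consists of the preceding run
together with the first (that many) letters of the selected run. -/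
def findSoliton : List (List (ℤ × Bool)) → Option (List (ℤ × Bool))
  | r1 :: r2 :: rest =>
    if r1.length ≤ r2.length then some (r1 ++ r2.take r1.length)
    else findSoliton (r2 :: rest)
  | _ => none

/-- Iterated Takahashi–Satsuma algorithm (with fuel): repeatedly identify the
soliton given by `findSoliton` and remove its letters from the word. -/
def tsAux : ℕ → List (ℤ × Bool) → List (List (ℤ × Bool))
  | 0, _ => []
  | fuel + 1, w =>
    match findSoliton (runsOf w) with
    | none => []
    | some s => s :: tsAux fuel (w.filter (fun a => !((s.map Prod.fst).contains a.1)))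

/-- The solitons identified by the Takahashi–Satsuma algorithm in a finite word. -/
def tsSolitons (w : List (ℤ × Bool)) : List (List (ℤ × Bool)) := tsAux w.length w

/-- The word (with positions) strictly between sites `y1` and `y2`. -/
def excursionWord (η : Cfg) (y1 y2 : ℤ) : List (ℤ × Bool) :=
  (List.range (y2 - y1 - 1).toNat).map fun n => (y1 + 1 + n, η (y1 + 1 + n))

/-- `Γ_k η`: the set of `k`-solitons of `η`, each identified with the set of `2k`
sites it occupies.  A `k`-soliton is obtained by applying the Takahashi–Satsuma
algorithm to an excursion of `η` (the word between two consecutive records). -/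
def Gamma (η : Cfg) (k : ℕ) : Set (Finset ℤ) :=
  {γ | ∃ y1 y2 : ℤ, y1 < y2 ∧ isRecord η y1 ∧ isRecord η y2 ∧
    (∀ z : ℤ, y1 < z → z < y2 → ¬ isRecord η z) ∧
    ∃ s ∈ tsSolitons (excursionWord η y1 y2), s.length = 2 * k ∧
      γ = (s.map Prod.fst).toFinset}

/-- The head of a soliton `γ` of `η`: the positions of its ones. -/
def headF (η : Cfg) (γ : Finset ℤ) : Finset ℤ := γ.filter fun x => η x = true

/-- The tail of a soliton `γ` of `η`: the positions of its zeros. -/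
def tailF (η : Cfg) (γ : Finset ℤ) : Finset ℤ := γ.filter fun x => η x = false

/-!
Let a carrier with numbered seats read a configuration from left to right: each ball takes the first
free seat and each empty box frees the first occupied one.  Label every site by the number of the
seat that changes there, counted from `1`, and by `0` if none does, which happens at the records.

The sites of one letter in a `k`-soliton carry the labels `1, …, k` in this order, each label being
followed only by smaller ones until the next site of the soliton.  Indeed, when the algorithm
extracts a soliton, both of its blocks change the first `k` seats one after the other, so that the
rest of the word is read as if the soliton were absent.  Conversely, disjoint chains of this kind
that cover all labelled sites cannot be prolonged.  Hence the labels of the sites with a given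
letter determine the heads, or tails, of all solitons: they are the maximal chains.

As `T` exchanges the letters off the records, the carriers of `η` and `Tη` stay complementary up to
the last occupied seat of the former.  So an empty box of `η` frees the very seat that the ball of
`Tη` at the same site takes: the labels of the empty boxes of `η` are those of the balls of `Tη`.
-/

/-- A word of occupied and empty boxes, each letter carrying the position of its box. -/
abbrev Word := List (ℤ × Bool)

/-- A carrier with seats numbered from `0`: `S j` tells whether seat `j` is occupied.  Reading a
configuration from left to right, each ball takes the first free seat and each empty box frees the
first occupied one. -/
abbrev Carrier := ℕ → Bool

namespace Carrier

/-- The carrier without passengers. -/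
def empty : Carrier := fun _ => false

open Classical in
/-- The number, counted from `1`, of the seat that changes when the letter `b` is read; it is `0` if
no seat does (an empty box read by an empty carrier). -/
noncomputable def seat (S : Carrier) (b : Bool) : ℕ :=
  if h : ∃ j, S j ≠ b then Nat.find h + 1 else 0

/-- The carrier after reading the letter `b`. -/
noncomputable def next (S : Carrier) (b : Bool) : Carrier :=
  fun j => if j + 1 = S.seat b then b else S j

/-- The carrier after reading a word. -/
noncomputable def run (S : Carrier) (w : Word) : Carrier :=
  w.foldl (fun S a => S.next a.2) S

/-- `S.IsLabelling L w`: when the carrier `S` reads the word `w`, the function `L` records at each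
position the number of the seat that changes. -/
def IsLabelling (L : ℤ → ℕ) : Carrier → Word → Prop
  | _, [] => True
  | S, a :: w => L a.1 = S.seat a.2 ∧ IsLabelling L (S.next a.2) w

variable {S : Carrier} {b : Bool} {L : ℤ → ℕ}

lemma seat_eq_zero_iff : S.seat b = 0 ↔ ∀ j, S j = b := by
  simp [seat]

lemma seat_eq_succ_iff {m : ℕ} : S.seat b = m + 1 ↔ S m = !b ∧ ∀ j < m, S j = b := by
  classical
  by_cases h : ∃ j, S j ≠ b
  · simp [seat, h, Nat.find_eq_iff, Bool.eq_not]
  · push Not at h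
    simp [seat, h]

lemma next_apply_of_forall_lt {i : ℕ} (h : ∀ j < i, S j = b) : S.next b i = b := by
  by_cases hi : S i = b
  · simp [next, hi]
  · exact if_pos (seat_eq_succ_iff.2 ⟨Bool.eq_not.2 hi, h⟩).symm

lemma run_nil (S : Carrier) : S.run [] = S := rfl

lemma run_append (S : Carrier) (u v : Word) : S.run (u ++ v) = (S.run u).run v :=
  List.foldl_append

lemma run_concat (S : Carrier) (w : Word) (a : ℤ × Bool) :
    S.run (w ++ [a]) = (S.run w).next a.2 := by
  rw [run_append]; rfl

lemma isLabelling_append (S : Carrier) (u v : Word) :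
    IsLabelling L S (u ++ v) ↔ IsLabelling L S u ∧ IsLabelling L (S.run u) v := by
  induction u generalizing S with
  | nil => simp [IsLabelling, run_nil]
  | cons a u ih => simp [IsLabelling, ih, and_assoc, run]

lemma isLabelling_concat (S : Carrier) (w : Word) (a : ℤ × Bool) :
    IsLabelling L S (w ++ [a]) ↔ IsLabelling L S w ∧ L a.1 = (S.run w).seat a.2 := by
  simp [isLabelling_append, IsLabelling]

lemma run_of_forall_eq {r : Word} (hr : ∀ a ∈ r, a.2 = b) (hS : ∀ j < r.length, S j = !b) :
    S.run r = fun j => if j < r.length then b else S j := by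
  induction r using List.reverseRecOn with
  | nil => simp [run_nil]
  | append_singleton r a ih =>
    have ih := ih (fun x hx => hr x (by simp [hx])) fun j hj => hS j (by simp; omega)
    have ha : a.2 = b := hr a (by simp)
    have hseat : (S.run r).seat b = r.length + 1 := by
      rw [seat_eq_succ_iff, ih]
      exact ⟨by simpa using hS r.length (by simp), fun j hj => if_pos hj⟩
    funext j
    rw [run_concat, ha, next, hseat, ih, List.length_append, List.length_singleton]
    grind

lemma IsLabelling.map_eq_range' {r : Word} (h : IsLabelling L S r) (hr : ∀ a ∈ r, a.2 = b)
    (hS : ∀ j < r.length, S j = !b) :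
    (r.map Prod.fst).map L = List.range' 1 r.length := by
  induction r using List.reverseRecOn with
  | nil => rfl
  | append_singleton r a ih =>
    obtain ⟨h, ha⟩ := (isLabelling_concat S r a).1 h
    have hr' : ∀ x ∈ r, x.2 = b := fun x hx => hr x (by simp [hx])
    have hS' : ∀ j < r.length, S j = !b := fun j hj => hS j (by simp; omega)
    have hseat : L a.1 = r.length + 1 := by
      rw [ha, hr a (by simp), seat_eq_succ_iff, run_of_forall_eq hr' hS']
      exact ⟨by simpa using hS r.length (by simp), fun j hj => if_pos hj⟩
    simp [ih h hr' hS', hseat, List.range'_1_concat, Nat.add_comm]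

end Carrier

/-! ### Runs -/

/-- The words in the list are nonempty and constant, with alternating letters starting with `b`;
this is the shape of `runsOf w`. -/
def AlternatingRuns : Bool → List Word → Prop
  | _, [] => True
  | b, r :: rs => r ≠ [] ∧ (∀ a ∈ r, a.2 = b) ∧ AlternatingRuns (!b) rs

lemma flatten_runsOf (w : Word) : (runsOf w).flatten = w := by
  induction w with
  | nil => rfl
  | cons a w ih => grind [runsOf, List.flatten_cons, List.flatten_nil]

lemma runsOf_eq_nil {w : Word} : runsOf w = [] ↔ w = [] := by
  cases w <;> grind [runsOf]

lemma alternatingRuns_runsOf_cons (a : ℤ × Bool) (w : Word) :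
    AlternatingRuns a.2 (runsOf (a :: w)) := by
  induction w generalizing a with
  | nil => simp [runsOf, AlternatingRuns]
  | cons c w ih =>
    have ih := ih c
    rw [runsOf]
    rcases hR : runsOf (c :: w) with _ | ⟨_ | ⟨d, r⟩, rs⟩
    · simp [runsOf_eq_nil] at hR
    · simp [hR, AlternatingRuns] at ih
    · rw [hR] at ih
      obtain ⟨hne, hr, hrs⟩ := ih
      have hd : d.2 = c.2 := hr d (by simp)
      by_cases hac : d.2 = a.2
      · grind [AlternatingRuns]
      · have hca : c.2 = !a.2 := by rwa [← hd, Bool.eq_not]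
        rw [hca] at hr hrs
        simp only [List.head?_cons, Option.map_some, Option.some.injEq, hac, if_false]
        exact ⟨by simp, by simp, hne, hr, hrs⟩

/-- Each word of the list is shorter than the previous one; the Takahashi–Satsuma search skips such
initial segments of `runsOf w`. -/
abbrev DecreasingLengths (rs : List Word) : Prop :=
  rs.IsChain fun p q => q.length < p.length

lemma decreasingLengths_of_findSoliton_eq_none {rs : List Word} (h : findSoliton rs = none) :
    DecreasingLengths rs := by
  induction rs with
  | nil => simp
  | cons r rs ih =>
    cases rs with
    | nil => simp
    | cons r' rs =>
      obtain hlt | hle := lt_or_ge r'.length r.length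
      · exact List.isChain_cons_cons.2 ⟨hlt, ih (by rwa [findSoliton, if_neg hlt.not_ge] at h)⟩
      · simp [findSoliton, hle] at h

lemma exists_of_findSoliton_eq_some {rs : List Word} {s : Word} (h : findSoliton rs = some s) :
    ∃ ps r₁ r₂ rest, rs = ps ++ r₁ :: r₂ :: rest ∧ DecreasingLengths (ps ++ [r₁]) ∧
      r₁.length ≤ r₂.length ∧ s = r₁ ++ r₂.take r₁.length := by
  induction rs with
  | nil => simp [findSoliton] at h
  | cons r rs ih =>
    cases rs with
    | nil => simp [findSoliton] at h
    | cons r' rs =>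
      obtain hlt | hle := lt_or_ge r'.length r.length
      · rw [findSoliton, if_neg hlt.not_ge] at h
        obtain ⟨ps, r₁, r₂, rest, heq, hdec, hlen, hs⟩ := ih h
        refine ⟨r :: ps, r₁, r₂, rest, by rw [heq]; rfl, ?_, hlen, hs⟩
        refine List.isChain_cons.2 ⟨fun q hq => ?_, hdec⟩
        have : q = r' := by
          cases ps <;> simp_all
        exact this ▸ hlt
      · rw [findSoliton, if_pos hle, Option.some.injEq] at h
        exact ⟨[], r, r', rs, rfl, by simp, hle, h.symm⟩

namespace AlternatingRuns

variable {b : Bool} {S : Carrier}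

/-- Reading a run of length `n` sets the first `n` seats to its letter, so a shorter run that
follows again finds its seats in the opposite state. -/
lemma opposed_of_decreasingLengths {ps : List Word} {r : Word} {rest : List Word}
    (hruns : AlternatingRuns b (ps ++ r :: rest)) (hdec : DecreasingLengths (ps ++ [r]))
    (hS : ∀ q ∈ (ps ++ [r]).head?, ∀ j < q.length, S j = !b) :
    ∃ c, (∀ a ∈ r, a.2 = c) ∧ AlternatingRuns (!c) rest ∧
      ∀ j < r.length, S.run ps.flatten j = !c := by
  induction ps generalizing b S with
  | nil => exact ⟨b, hruns.2.1, hruns.2.2, hS r rfl⟩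
  | cons p ps ih =>
    obtain ⟨-, hp, hruns⟩ := hruns
    obtain ⟨hhead, hdec⟩ := List.isChain_cons.1 hdec
    have hrun := Carrier.run_of_forall_eq hp (hS p rfl)
    obtain ⟨c, hc, hrest, hseats⟩ := ih (S := S.run p) hruns hdec fun q hq j hj => by
      simp [hrun, hj.trans (hhead q hq)]
    exact ⟨c, hc, hrest, by rwa [List.flatten_cons, Carrier.run_append]⟩

lemma ne_nil {rs : List Word} (hruns : AlternatingRuns b rs) : ∀ r ∈ rs, r ≠ [] := by
  induction rs generalizing b with
  | nil => simp
  | cons r rs ih => exact List.forall_mem_cons.2 ⟨hruns.1, ih hruns.2.2⟩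

/-- The last letter of a run of length `n` changes seat `n`. -/
lemma length_lt_label_getLast {L : ℤ → ℕ} {ps : List Word} {r : Word} {rest : List Word}
    (hruns : AlternatingRuns b (ps ++ r :: rest)) (hdec : DecreasingLengths (ps ++ [r]))
    (hS : ∀ q ∈ (ps ++ [r]).head?, ∀ j < q.length, S j = !b)
    (hL : Carrier.IsLabelling L S ps.flatten) :
    ∀ a ∈ ps.flatten.getLast?, r.length < L a.1 := by
  rcases List.eq_nil_or_concat' ps with rfl | ⟨qs, p, rfl⟩
  · simp
  have hp : p ≠ [] := hruns.ne_nil p (by simp)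
  have hdec' : DecreasingLengths (qs ++ [p]) := hdec.left_of_append
  have hlen : r.length < p.length := by
    simpa using (List.isChain_append.1 hdec).2.2 p (by simp) r (by simp)
  obtain ⟨c, hc, -, hseats⟩ := opposed_of_decreasingLengths (S := S) (rest := r :: rest)
    (by simpa using hruns) hdec' (by
      intro q hq
      refine hS q ?_
      rw [List.head?_append, hq]; rfl)
  rw [List.flatten_concat, Carrier.isLabelling_append] at hL
  have hlabels := hL.2.map_eq_range' hc hseats
  intro a ha
  rw [List.flatten_concat, List.getLast?_append_of_ne_nil _ hp] at ha
  have hlast : ((p.map Prod.fst).map L).getLast? = some (L a.1) := by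
    rw [List.getLast?_map, List.getLast?_map, ha]; rfl
  rw [hlabels, List.getLast?_range'] at hlast
  grind

end AlternatingRuns

/-! ### Dyck words and the extraction of solitons -/

/-- The number of balls of a word minus its number of empty boxes. -/
def balance (w : Word) : ℤ := (w.map fun a => 2 * valZ a.2 - 1).sum

lemma balance_append (u v : Word) : balance (u ++ v) = balance u + balance v := by
  simp [balance]

lemma balance_of_forall_eq {b : Bool} {r : Word} (hr : ∀ a ∈ r, a.2 = b) :
    balance r = r.length * (2 * valZ b - 1) := by
  rw [balance, List.map_congr_left (g := fun _ => 2 * valZ b - 1) fun a ha => by rw [hr a ha]]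
  simp

lemma valZ_not (b : Bool) : valZ (!b) = 1 - valZ b := by
  cases b <;> rfl

/-- Alternating runs of decreasing lengths never return to balance zero, since the first run
outweighs everything that follows. -/
lemma AlternatingRuns.balance_bounds {b : Bool} {r : Word} {rs : List Word}
    (hruns : AlternatingRuns b (r :: rs)) (hdec : DecreasingLengths (r :: rs)) :
    0 < (2 * valZ b - 1) * balance (r :: rs).flatten ∧
      (2 * valZ b - 1) * balance (r :: rs).flatten ≤ r.length := by
  induction rs generalizing b r with
  | nil =>
    have : 0 < r.length := List.length_pos_of_ne_nil hruns.1
    rw [List.flatten_singleton, balance_of_forall_eq hruns.2.1]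
    cases b <;> simp [valZ] <;> omega
  | cons r' rs ih =>
    obtain ⟨hlt, hdec⟩ := List.isChain_cons_cons.1 hdec
    have ih := ih hruns.2.2 hdec
    rw [List.flatten_cons, balance_append, balance_of_forall_eq hruns.2.1]
    rw [valZ_not] at ih
    cases b <;> simp [valZ] at ih ⊢ <;> omega

/-- Balanced words without a prefix of negative balance; excursions are of this form. -/
def IsDyck (w : Word) : Prop := balance w = 0 ∧ ∀ p, p <+: w → 0 ≤ balance p

lemma IsDyck.of_append_append {u m v : Word} (h : IsDyck (u ++ m ++ v)) (hm : balance m = 0) :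
    IsDyck (u ++ v) := by
  refine ⟨by simpa [balance_append, hm] using h.1, fun p hp => ?_⟩
  rcases List.prefix_or_prefix_of_prefix hp (List.prefix_append u v) with hp | ⟨q, rfl⟩
  · exact h.2 p (by rw [List.append_assoc]; exact hp.trans (List.prefix_append _ _))
  · have := h.2 (u ++ m ++ q) (by simpa using hp)
    simpa [balance_append, hm] using this

lemma IsDyck.head_eq_true {a : ℤ × Bool} {w : Word} (h : IsDyck (a :: w)) : a.2 = true := by
  have := h.2 [a] (by simp)
  by_contra ha
  simp [balance, valZ, ha] at this

/-- One step of the Takahashi–Satsuma algorithm: the soliton `r₁ ++ r₂` is extracted from `w`, where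
`b` is the letter of `r₁`.  The last two fields say where the soliton sits in the empty carrier
reading `w`: it changes the first seats, whereas the letter just before it changes a later one. -/
structure SolitonExtraction (w pre r₁ r₂ post : Word) (b : Bool) : Prop where
  find : findSoliton (runsOf w) = some (r₁ ++ r₂)
  eq : w = pre ++ (r₁ ++ r₂) ++ post
  ne_nil : r₁ ≠ []
  length_eq : r₂.length = r₁.length
  fst_eq : ∀ a ∈ r₁, a.2 = b
  snd_eq : ∀ a ∈ r₂, a.2 = !b
  seats : ∀ j < r₁.length, Carrier.empty.run pre j = !b
  label_getLast : ∀ L, Carrier.IsLabelling L Carrier.empty pre →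
    ∀ a ∈ pre.getLast?, r₁.length < L a.1

lemma exists_solitonExtraction {a : ℤ × Bool} {w s : Word} (ha : a.2 = true)
    (h : findSoliton (runsOf (a :: w)) = some s) :
    ∃ pre r₁ r₂ post b, SolitonExtraction (a :: w) pre r₁ r₂ post b := by
  obtain ⟨ps, r₁, r₂, rest, heq, hdec, hlen, rfl⟩ := exists_of_findSoliton_eq_some h
  have hruns := heq ▸ alternatingRuns_runsOf_cons a w
  rw [ha] at hruns
  have hempty : ∀ q ∈ (ps ++ [r₁]).head?, ∀ j < q.length, Carrier.empty j = !true :=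
    fun _ _ _ _ => rfl
  obtain ⟨c, hr₁, ⟨-, hr₂, -⟩, hseats⟩ := hruns.opposed_of_decreasingLengths hdec hempty
  refine ⟨ps.flatten, r₁, r₂.take r₁.length, r₂.drop r₁.length ++ rest.flatten, c, h, ?_,
    hruns.ne_nil r₁ (by simp), by simpa using hlen, hr₁,
    fun x hx => hr₂ x (List.mem_of_mem_take hx), hseats,
    fun L => hruns.length_lt_label_getLast hdec hempty⟩
  rw [← flatten_runsOf (a :: w), heq]
  simp [← List.append_assoc (r₂.take _)]

namespace SolitonExtraction

variable {w pre r₁ r₂ post : Word} {b : Bool} {L : ℤ → ℕ}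

lemma balance_eq_zero (E : SolitonExtraction w pre r₁ r₂ post b) : balance (r₁ ++ r₂) = 0 := by
  rw [balance_append, balance_of_forall_eq E.fst_eq, balance_of_forall_eq E.snd_eq, E.length_eq,
    valZ_not]
  ring

lemma length_append_lt (E : SolitonExtraction w pre r₁ r₂ post b) :
    (pre ++ post).length < w.length := by
  have := List.length_pos_of_ne_nil E.ne_nil
  simp only [E.eq, List.length_append]
  omega

lemma run_fst (E : SolitonExtraction w pre r₁ r₂ post b) :
    Carrier.empty.run (pre ++ r₁) =
      fun j => if j < r₁.length then b else Carrier.empty.run pre j := by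
  rw [Carrier.run_append, Carrier.run_of_forall_eq E.fst_eq E.seats]

lemma seats_snd (E : SolitonExtraction w pre r₁ r₂ post b) :
    ∀ j < r₂.length, Carrier.empty.run (pre ++ r₁) j = !!b := fun j hj => by
  rw [E.run_fst, Bool.not_not]
  exact if_pos (E.length_eq ▸ hj)

lemma run_soliton (E : SolitonExtraction w pre r₁ r₂ post b) :
    Carrier.empty.run (pre ++ (r₁ ++ r₂)) = Carrier.empty.run pre := by
  rw [← List.append_assoc, Carrier.run_append, Carrier.run_of_forall_eq E.snd_eq E.seats_snd]
  funext j
  by_cases hj : j < r₁.length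
  · simp [E.length_eq, hj, E.seats j hj]
  · simp [E.length_eq, hj, E.run_fst]

lemma run_eq (E : SolitonExtraction w pre r₁ r₂ post b) :
    Carrier.empty.run w = Carrier.empty.run (pre ++ post) := by
  rw [E.eq, Carrier.run_append, E.run_soliton, ← Carrier.run_append]

lemma isLabelling_append (E : SolitonExtraction w pre r₁ r₂ post b)
    (hL : Carrier.IsLabelling L Carrier.empty w) :
    Carrier.IsLabelling L Carrier.empty (pre ++ post) := by
  rw [E.eq, Carrier.isLabelling_append, E.run_soliton, Carrier.isLabelling_append] at hL
  exact (Carrier.isLabelling_append ..).2 ⟨hL.1.1, hL.2⟩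

lemma labels_eq (E : SolitonExtraction w pre r₁ r₂ post b)
    (hL : Carrier.IsLabelling L Carrier.empty w) :
    (r₁.map Prod.fst).map L = List.range' 1 r₁.length ∧
      (r₂.map Prod.fst).map L = List.range' 1 r₁.length := by
  rw [E.eq, Carrier.isLabelling_append, ← List.append_assoc, Carrier.isLabelling_append,
    Carrier.isLabelling_append] at hL
  exact ⟨hL.1.1.2.map_eq_range' E.fst_eq E.seats,
    E.length_eq ▸ hL.1.2.map_eq_range' E.snd_eq E.seats_snd⟩

lemma lt_label_getLast (E : SolitonExtraction w pre r₁ r₂ post b)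
    (hL : Carrier.IsLabelling L Carrier.empty w) : ∀ a ∈ pre.getLast?, r₁.length < L a.1 :=
  E.label_getLast L ((Carrier.isLabelling_append ..).1 (E.isLabelling_append hL)).1

end SolitonExtraction

lemma IsDyck.exists_solitonExtraction {w : Word} (hw : IsDyck w) (hne : w ≠ []) :
    ∃ pre r₁ r₂ post b, SolitonExtraction w pre r₁ r₂ post b := by
  obtain ⟨a, w, rfl⟩ := List.exists_cons_of_ne_nil hne
  cases h : findSoliton (runsOf (a :: w)) with
  | some s => exact _root_.exists_solitonExtraction hw.head_eq_true h
  | none =>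
    have hruns := alternatingRuns_runsOf_cons a w
    have hdec := decreasingLengths_of_findSoliton_eq_none h
    have hflat := flatten_runsOf (a :: w)
    obtain ⟨r, rs, hrs⟩ := List.exists_cons_of_ne_nil (mt runsOf_eq_nil.1 hne)
    rw [hrs] at hruns hdec hflat
    have := (hruns.balance_bounds hdec).1
    rw [hflat, hw.1] at this
    omega

@[elab_as_elim]
theorem IsDyck.induction {P : Word → Prop} (nil : P [])
    (extract : ∀ {w pre r₁ r₂ post : Word} {b : Bool},
      SolitonExtraction w pre r₁ r₂ post b → P (pre ++ post) → P w)
    {w : Word} (hw : IsDyck w) : P w := by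
  induction hn : w.length using Nat.strong_induction_on generalizing w with
  | _ n ih =>
    rcases eq_or_ne w [] with rfl | hne
    · exact nil
    obtain ⟨pre, r₁, r₂, post, b, E⟩ := hw.exists_solitonExtraction hne
    exact extract E (ih _ (hn ▸ E.length_append_lt)
      ((E.eq ▸ hw).of_append_append E.balance_eq_zero) rfl)

lemma IsDyck.run_empty {w : Word} (hw : IsDyck w) : Carrier.empty.run w = Carrier.empty := by
  refine hw.induction rfl fun E ih => ?_
  rw [E.run_eq, ih]

/-! ### Label chains -/

/-- Between the sites `x < y` all labels are smaller than that of `x`.  Consecutive sites of one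
colour in a soliton are related in this way. -/
def Reaches (D : ℤ → ℕ) (x y : ℤ) : Prop := x < y ∧ ∀ z, x < z → z < y → D z < D x

/-- The sites `l` carry the labels `1, 2, …, l.length`, each one being the first site after its
predecessor whose label is not smaller.  The sites of one colour in a soliton form such a chain. -/
def IsLabelChain (D : ℤ → ℕ) (l : List ℤ) : Prop :=
  l.map D = List.range' 1 l.length ∧ l.IsChain (Reaches D)

/-- The positions of the letter `b` in a word. -/
def colorSites (b : Bool) (w : Word) : List ℤ := (w.filter fun a => a.2 == b).map Prod.fst

/-- The properties of a Takahashi–Satsuma soliton that are visible to a labelling `L`: it has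
equally many sites of both colours, which form label chains. -/
structure IsLabelledSoliton (L : ℤ → ℕ) (s : Word) : Prop where
  ne_nil : s ≠ []
  length_eq : ∀ b, s.length = 2 * (colorSites b s).length
  isLabelChain : ∀ b, IsLabelChain L (colorSites b s)

lemma mem_colorSites {b : Bool} {w : Word} {x : ℤ} : x ∈ colorSites b w ↔ (x, b) ∈ w := by
  simp [colorSites]

lemma colorSites_of_forall_eq {b : Bool} {w : Word} (h : ∀ a ∈ w, a.2 = b) :
    colorSites b w = w.map Prod.fst := by
  rw [colorSites, List.filter_eq_self.2 fun a ha => by simp [h a ha]]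

lemma colorSites_append (b : Bool) (u v : Word) :
    colorSites b (u ++ v) = colorSites b u ++ colorSites b v := by
  simp [colorSites]

lemma colorSites_not_of_forall_eq {b : Bool} {w : Word} (h : ∀ a ∈ w, a.2 = b) :
    colorSites (!b) w = [] := by
  rw [colorSites, List.map_eq_nil_iff, List.filter_eq_nil_iff]
  intro a ha
  simp [h a ha]

section Reaches

variable {D : ℤ → ℕ}

lemma Reaches.trans {x y z : ℤ} (hxy : Reaches D x y) (hyz : Reaches D y z) (hlt : D y < D x) :
    Reaches D x z := by
  refine ⟨hxy.1.trans hyz.1, fun u hxu huz => ?_⟩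
  rcases lt_trichotomy u y with huy | rfl | hyu
  · exact hxy.2 u hxu huy
  · exact hlt
  · exact (hyz.2 u hyu huz).trans hlt

lemma reaches_of_isChain {x y : ℤ} {m : List ℤ} (h : (x :: (m ++ [y])).IsChain (Reaches D))
    (hm : ∀ z ∈ m, D z < D x) : Reaches D x y := by
  induction m with
  | nil => simpa using h
  | cons z m ih =>
    refine ih ?_ fun u hu => hm u (by simp [hu])
    rw [List.cons_append, List.isChain_cons_cons] at h
    obtain ⟨hz, hm'⟩ := List.isChain_cons.1 h.2
    exact List.isChain_cons.2 ⟨fun u hu => h.1.trans (hz u hu) (hm z (by simp)), hm'⟩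

lemma isChain_reaches_append_of_append_append {u m v : List ℤ} {k : ℕ}
    (h : (u ++ m ++ v).IsChain (Reaches D)) (hm : ∀ z ∈ m, D z ≤ k)
    (hu : ∀ x ∈ u.getLast?, k < D x) : (u ++ v).IsChain (Reaches D) := by
  refine List.isChain_append.2 ⟨h.left_of_append.left_of_append, h.right_of_append, ?_⟩
  intro x hx y hy
  obtain ⟨u', rfl⟩ := List.getLast?_eq_some_iff.1 hx
  obtain ⟨v', rfl⟩ := List.head?_eq_some_iff.1 hy
  have hinfix : x :: (m ++ [y]) <:+: u' ++ [x] ++ m ++ y :: v' := ⟨u', v', by simp⟩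
  exact reaches_of_isChain (h.infix hinfix) fun z hz => (hm z hz).trans_lt (hu x hx)

lemma nodup_of_isChain_reaches {l : List ℤ} (h : l.IsChain (Reaches D)) : l.Nodup :=
  (List.isChain_iff_pairwise.1 (h.imp fun _ _ h => h.1)).imp fun h => h.ne

end Reaches

namespace SolitonExtraction

variable {w pre r₁ r₂ post : Word} {b : Bool} {L : ℤ → ℕ}

lemma tsAux_succ (E : SolitonExtraction w pre r₁ r₂ post b) (hnodup : (w.map Prod.fst).Nodup)
    (n : ℕ) : tsAux (n + 1) w = (r₁ ++ r₂) :: tsAux n (pre ++ post) := by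
  have hfilter : w.filter (fun a => !(((r₁ ++ r₂).map Prod.fst).contains a.1)) = pre ++ post := by
    rw [E.eq, List.map_append, List.map_append, List.nodup_append, List.nodup_append] at hnodup
    obtain ⟨⟨-, -, hpre⟩, -, hpost⟩ := hnodup
    rw [E.eq, List.filter_append, List.filter_append, List.filter_eq_self (l := pre) |>.2,
      List.filter_eq_self (l := post) |>.2, List.filter_eq_nil_iff.2, List.append_nil]
    · intro a ha
      rw [List.contains_iff_mem.2 (List.mem_map_of_mem ha)]
      decide
    · intro a ha
      simpa using fun hs => hpost _ (List.mem_append_right _ hs) _ (List.mem_map_of_mem ha) rfl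
    · intro a ha
      simpa using fun hs => hpre _ (List.mem_map_of_mem ha) _ hs rfl
  rw [tsAux, E.find]
  simp only [hfilter]

lemma isLabelledSoliton (E : SolitonExtraction w pre r₁ r₂ post b)
    (hL : Carrier.IsLabelling L Carrier.empty w) (hw : (w.map Prod.fst).IsChain (Reaches L)) :
    IsLabelledSoliton L (r₁ ++ r₂) := by
  have hfst : colorSites b (r₁ ++ r₂) = r₁.map Prod.fst := by
    rw [colorSites_append, colorSites_of_forall_eq E.fst_eq,
      ← Bool.not_not b, colorSites_not_of_forall_eq E.snd_eq, List.append_nil]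
  have hsnd : colorSites (!b) (r₁ ++ r₂) = r₂.map Prod.fst := by
    rw [colorSites_append, colorSites_of_forall_eq E.snd_eq, colorSites_not_of_forall_eq E.fst_eq,
      List.nil_append]
  have hlabels := E.labels_eq hL
  have hchain : (r₁.map Prod.fst ++ r₂.map Prod.fst).IsChain (Reaches L) := by
    rw [E.eq, List.map_append, List.map_append, List.map_append] at hw
    exact hw.left_of_append.right_of_append
  refine ⟨by simp [E.ne_nil], ?_, ?_⟩ <;> rw [Bool.forall_bool' b, hfst, hsnd]
  · simp [E.length_eq, two_mul]
  · constructor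
    · exact ⟨by simpa only [List.length_map] using hlabels.1, hchain.left_of_append⟩
    · exact ⟨by simpa only [List.length_map, E.length_eq] using hlabels.2, hchain.right_of_append⟩

lemma isChain_append (E : SolitonExtraction w pre r₁ r₂ post b)
    (hL : Carrier.IsLabelling L Carrier.empty w) (hw : (w.map Prod.fst).IsChain (Reaches L)) :
    ((pre ++ post).map Prod.fst).IsChain (Reaches L) := by
  rw [E.eq, List.map_append, List.map_append] at hw
  rw [List.map_append]
  refine isChain_reaches_append_of_append_append (k := r₁.length) hw ?_ ?_
  · intro z hz
    have hmem : L z ∈ List.range' 1 r₁.length := by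
      rw [List.map_append, List.mem_append] at hz
      rcases hz with hz | hz
      · exact (E.labels_eq hL).1 ▸ List.mem_map_of_mem hz
      · exact (E.labels_eq hL).2 ▸ List.mem_map_of_mem hz
    rw [List.mem_range'_1] at hmem
    omega
  · intro x hx
    rw [List.getLast?_map] at hx
    obtain ⟨a, ha, rfl⟩ := Option.mem_map.1 hx
    exact E.lt_label_getLast hL a ha

end SolitonExtraction

lemma tsAux_nil (n : ℕ) : tsAux n [] = [] := by
  cases n <;> simp [tsAux, runsOf, findSoliton]

lemma IsDyck.isLabelledSoliton_of_mem_tsAux {L : ℤ → ℕ} {w : Word} (hw : IsDyck w)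
    (hL : Carrier.IsLabelling L Carrier.empty w) (hchain : (w.map Prod.fst).IsChain (Reaches L))
    {n : ℕ} {s : Word} (hs : s ∈ tsAux n w) : IsLabelledSoliton L s := by
  revert hL hchain n
  refine hw.induction ?_ fun E ih hL hchain n hs => ?_
  · simp [tsAux_nil]
  · cases n with
    | zero => simp [tsAux] at hs
    | succ n =>
      rw [E.tsAux_succ (nodup_of_isChain_reaches hchain)] at hs
      rcases List.mem_cons.1 hs with rfl | hs
      · exact E.isLabelledSoliton hL hchain
      · exact ih (E.isLabelling_append hL) (E.isChain_append hL hchain) hs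

lemma IsDyck.flatten_tsAux_perm {w : Word} (hw : IsDyck w) (hnodup : (w.map Prod.fst).Nodup)
    {n : ℕ} (hn : w.length ≤ n) : (tsAux n w).flatten.Perm w := by
  revert hnodup n
  refine hw.induction ?_ fun {w pre r₁ r₂ post b} E ih hnodup n hn => ?_
  · simp [tsAux_nil]
  · cases n with
    | zero => exact absurd E.length_append_lt (by omega)
    | succ n =>
      have hlt := E.length_append_lt
      have hsub : (pre ++ post).Sublist w := by
        rw [E.eq]
        exact (List.sublist_append_left _ _).append_right _
      rw [E.tsAux_succ hnodup, List.flatten_cons, E.eq]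
      refine ((ih (hnodup.sublist (hsub.map _)) (by omega)).append_left _).trans ?_
      rw [← List.append_assoc]
      exact List.perm_append_comm.append_right _

/-- The nonempty label chains that cannot be continued.  For suitable labels these are exactly the
sets of sites of one colour of the solitons. -/
def IsMaximalLabelChain (D : ℤ → ℕ) (l : List ℤ) : Prop :=
  l ≠ [] ∧ IsLabelChain D l ∧ ∀ x, ¬ IsLabelChain D (l ++ [x])

section IsLabelChain

variable {D D' : ℤ → ℕ}

lemma isLabelChain_concat {l : List ℤ} {x : ℤ} :
    IsLabelChain D (l ++ [x]) ↔
      IsLabelChain D l ∧ D x = l.length + 1 ∧ ∀ y ∈ l.getLast?, Reaches D y x := by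
  simp only [IsLabelChain, List.map_append, List.length_append, List.length_singleton,
    List.range'_1_concat, List.map_singleton, List.append_singleton_inj, List.isChain_append,
    List.isChain_singleton, List.head?_cons, Option.mem_some_iff, forall_eq', true_and]
  rw [Nat.add_comm 1]
  tauto

lemma IsLabelChain.of_append {u v : List ℤ} (h : IsLabelChain D (u ++ v)) : IsLabelChain D u := by
  induction v using List.reverseRecOn with
  | nil => simpa using h
  | append_singleton v x ih => exact ih (isLabelChain_concat.1 (by rwa [List.append_assoc])).1

lemma Reaches.left_unique {x y z : ℤ} (hx : Reaches D x z) (hy : Reaches D y z) (h : D x = D y) :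
    x = y := by
  rcases lt_trichotomy x y with hlt | rfl | hlt
  · exact absurd (hx.2 y hlt hy.1) (by omega)
  · rfl
  · exact absurd (hy.2 x hlt hx.1) (by omega)

lemma IsLabelChain.eq_of_concat {u v : List ℤ} {x : ℤ} (hu : IsLabelChain D (u ++ [x]))
    (hv : IsLabelChain D (v ++ [x])) : u = v := by
  induction u using List.reverseRecOn generalizing v x with
  | nil =>
    obtain ⟨-, hx, -⟩ := isLabelChain_concat.1 hu
    obtain ⟨-, hx', -⟩ := isLabelChain_concat.1 hv
    exact (List.eq_nil_of_length_eq_zero (by simp_all)).symm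
  | append_singleton u y ih =>
    obtain ⟨hu, hx, hyx⟩ := isLabelChain_concat.1 hu
    obtain ⟨hv, hx', hvx⟩ := isLabelChain_concat.1 hv
    rcases List.eq_nil_or_concat' v with rfl | ⟨v, y', rfl⟩
    · simp_all
    have hlen : u.length = v.length := by simp_all
    have hy : y = y' := (hyx y (by simp)).left_unique (hvx y' (by simp)) (by
      rw [(isLabelChain_concat.1 hu).2.1, (isLabelChain_concat.1 hv).2.1, hlen])
    subst hy
    rw [ih hu hv]

lemma IsLabelChain.prefix_of_mem {l l' : List ℤ} {x : ℤ} (h : IsLabelChain D (l ++ [x]))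
    (h' : IsLabelChain D l') (hx : x ∈ l') : l ++ [x] <+: l' := by
  obtain ⟨s, t, rfl⟩ := List.append_of_mem hx
  rw [List.append_cons] at h'
  rw [List.append_cons s]
  rw [h.eq_of_concat h'.of_append]
  exact List.prefix_append _ _

lemma IsLabelChain.of_le {l : List ℤ} (h : IsLabelChain D l) (heq : ∀ x ∈ l, D' x = D x)
    (hle : ∀ x, D' x ≤ D x) : IsLabelChain D' l := by
  refine ⟨by rw [← h.1, List.map_congr_left heq], ?_⟩
  refine h.2.imp_of_mem_imp fun x y hx _ hxy => ⟨hxy.1, fun z hxz hzy => ?_⟩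
  exact ((hle z).trans_lt (hxy.2 z hxz hzy)).trans_eq (heq x hx).symm

/-- Disjoint label chains that cover all labelled sites cannot be continued, because the next site
would lie on another chain of the family, which would contain the continued chain. -/
theorem mem_iff_isMaximalLabelChain {F : Set (List ℤ)} (hne : ∀ l ∈ F, l ≠ [])
    (hchain : ∀ l ∈ F, IsLabelChain D l)
    (hdisj : ∀ l ∈ F, ∀ l' ∈ F, ∀ x, x ∈ l → x ∈ l' → l = l')
    (hcover : ∀ x, D x ≠ 0 → ∃ l ∈ F, x ∈ l) (l : List ℤ) :
    l ∈ F ↔ IsMaximalLabelChain D l := by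
  have hextend : ∀ u x, IsLabelChain D (u ++ [x]) → ∃ l' ∈ F, u ++ [x] <+: l' := by
    intro u x h
    have hx : D x ≠ 0 := by rw [(isLabelChain_concat.1 h).2.1]; omega
    obtain ⟨l', hl', hxl'⟩ := hcover x hx
    exact ⟨l', hl', h.prefix_of_mem (hchain l' hl') hxl'⟩
  constructor
  · intro hl
    refine ⟨hne l hl, hchain l hl, fun x hx => ?_⟩
    obtain ⟨l', hl', hprefix⟩ := hextend l x hx
    obtain ⟨y, hy⟩ := List.exists_mem_of_ne_nil l (hne l hl)
    have : l = l' := hdisj l hl l' hl' y hy (hprefix.subset (by simp [hy]))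
    simpa [this] using hprefix.length_le
  · rintro ⟨hl, hlchain, hmax⟩
    obtain ⟨u, x, rfl⟩ := (List.eq_nil_or_concat' l).resolve_left hl
    obtain ⟨l', hl', t, rfl⟩ := hextend u x hlchain
    cases t with
    | nil => simpa using hl'
    | cons y t =>
      refine absurd ?_ (hmax y)
      exact (List.append_cons .. ▸ hchain _ hl' : IsLabelChain D (u ++ [x] ++ [y] ++ t)).of_append

end IsLabelChain

/-! ### Records and lifts -/

/-- The set of records of a configuration. -/
def records (η : Cfg) : Set ℤ := {x | isRecord η x}

/-- The sites `y₁ < y₂` are records without a record in between, so that they delimit an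
excursion. -/
def ConsecutiveRecords (η : Cfg) (y₁ y₂ : ℤ) : Prop :=
  y₁ < y₂ ∧ isRecord η y₁ ∧ isRecord η y₂ ∧ ∀ z, y₁ < z → z < y₂ → ¬ isRecord η z

/-- The last record at or before `x`.  It is only meaningful when there is one; see
`isGreatest_lastRecord`. -/
noncomputable def lastRecord (η : Cfg) (x : ℤ) : ℤ := sSup {r | r ≤ x ∧ isRecord η r}

lemma isRecord.eq_false {η : Cfg} {x : ℤ} (h : isRecord η x) : η x = false := by
  have hlt := h x le_rfl
  simp only [Finset.Icc_self, Finset.sum_singleton] at hlt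
  by_contra hx
  simp [eq_true_of_ne_false hx, valZ] at hlt

lemma isLift_xi0 (η : Cfg) : IsLift η (xi0 η) := by
  intro x
  rcases lt_trichotomy x 0 with hx | rfl | hx
  · have hIcc : Finset.Icc x 0 = insert x (Finset.Icc (x + 1) 0) := by
      ext; simp only [Finset.mem_Icc, Finset.mem_insert]; omega
    rw [xi0, xi0, if_neg hx.not_ge, if_neg (by omega), sub_add_cancel, hIcc,
      Finset.sum_insert (by simp)]
    ring
  · simp [xi0]
  · have hIcc : Finset.Icc 1 x = insert x (Finset.Icc 1 (x - 1)) := by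
      ext; simp only [Finset.mem_Icc, Finset.mem_insert]; omega
    rw [xi0, xi0, if_pos hx.le, if_pos (by omega), hIcc, Finset.sum_insert (by simp)]
    ring

namespace IsLift

variable {η : Cfg} {ξ : ℤ → ℤ}

lemma sum_Icc (h : IsLift η ξ) {z x : ℤ} (hzx : z ≤ x + 1) :
    ∑ y ∈ Finset.Icc z x, (2 * valZ (η y) - 1) = ξ x - ξ (z - 1) := by
  obtain ⟨n, hn⟩ := Int.le.dest hzx
  induction n generalizing x with
  | zero =>
    obtain rfl : x = z - 1 := by omega
    simp
  | succ n ih =>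
    have hIcc : Finset.Icc z x = insert x (Finset.Icc z (x - 1)) := by
      ext; simp only [Finset.mem_Icc, Finset.mem_insert]; omega
    rw [hIcc, Finset.sum_insert (by simp), ih (by omega) (by push_cast at hn; omega), ← h x]
    ring

lemma isRecord_iff (h : IsLift η ξ) {x : ℤ} : isRecord η x ↔ ∀ z < x, ξ x < ξ z := by
  have hsum : ∀ z ≤ x, (∑ y ∈ Finset.Icc z x, valZ (η y) <
      ∑ y ∈ Finset.Icc z x, (1 - valZ (η y))) ↔ ξ x < ξ (z - 1) := by
    intro z hz
    rw [← sub_neg, ← Finset.sum_sub_distrib, ← sub_neg (a := ξ x), ← h.sum_Icc (by omega)]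
    exact iff_of_eq (congrArg (· < 0) (Finset.sum_congr rfl fun y _ => by ring))
  refine ⟨fun hx z hz => ?_, fun hx z hz => (hsum z hz).2 (hx _ (by omega))⟩
  simpa using (hsum (z + 1) (by omega)).1 (hx (z + 1) (by omega))

lemma apply_record_le (h : IsLift η ξ) {r x : ℤ} (hr : isRecord η r)
    (hno : ∀ z, r < z → z ≤ x → ¬ isRecord η z) {z : ℤ} (hzx : z ≤ x) : ξ r ≤ ξ z := by
  by_contra! hz
  obtain ⟨z₀, ⟨hz₀x, hz₀⟩, hleast⟩ := Int.exists_least_of_bdd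
    (P := fun z => z ≤ x ∧ ξ z < ξ r)
    ⟨r, fun u hu => by
      by_contra! hur
      exact absurd (h.isRecord_iff.1 hr u hur) (by omega)⟩ ⟨z, hzx, hz⟩
  have hrz₀ : r < z₀ := by
    rcases lt_trichotomy r z₀ with hlt | rfl | hlt
    · exact hlt
    · omega
    · exact absurd (h.isRecord_iff.1 hr z₀ hlt) (by omega)
  refine hno z₀ hrz₀ hz₀x (h.isRecord_iff.2 fun u hu => ?_)
  by_contra! hu'
  exact absurd (hleast u ⟨by omega, by omega⟩) (by omega)

lemma not_bddBelow_records (h : IsLift η ξ) (hξ : Tendsto ξ atBot atTop) :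
    ¬ BddBelow (records η) := by
  rw [not_bddBelow_iff]
  intro x
  obtain ⟨N, hN⟩ := eventually_atBot.1 (hξ.eventually_gt_atTop (ξ (x - 1)))
  obtain ⟨r, ⟨hrx, hr⟩, hleast⟩ := Int.exists_least_of_bdd
    (P := fun z => z ≤ x - 1 ∧ ξ z ≤ ξ (x - 1))
    ⟨N, fun z hz => by
      by_contra! hzN
      exact absurd (hN z hzN.le) (by omega)⟩ ⟨x - 1, le_rfl, le_rfl⟩
  refine ⟨r, h.isRecord_iff.2 fun z hz => ?_, by omega⟩
  by_contra! hz'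
  exact absurd (hleast z ⟨by omega, by omega⟩) (by omega)

lemma exists_apply_lt (h : IsLift η ξ) (habove : ¬ BddAbove (records η)) (B : ℤ) :
    ∃ x, ξ x < B := by
  by_contra! hB
  obtain ⟨r₀, hr₀, -⟩ := not_bddAbove_iff.1 habove 0
  obtain ⟨-, ⟨r, -, rfl⟩, hleast⟩ := Int.exists_least_of_bdd
    (P := fun v => ∃ r ∈ records η, ξ r = v) ⟨B, by rintro _ ⟨r, -, rfl⟩; exact hB r⟩
    ⟨ξ r₀, r₀, hr₀, rfl⟩
  obtain ⟨r', hr', hlt⟩ := not_bddAbove_iff.1 habove r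
  exact absurd (hleast (ξ r') ⟨r', hr', rfl⟩) (h.isRecord_iff.1 hr' r hlt).not_ge

end IsLift

section lastRecord

variable {η : Cfg} {ξ : ℤ → ℤ} {x : ℤ}

lemma isGreatest_lastRecord (hbelow : ¬ BddBelow (records η)) (x : ℤ) :
    IsGreatest {r | r ≤ x ∧ isRecord η r} (lastRecord η x) := by
  obtain ⟨r, hr, hrx⟩ := not_bddBelow_iff.1 hbelow x
  have hbdd : BddAbove {r | r ≤ x ∧ isRecord η r} := ⟨x, fun _ h => h.1⟩
  exact ⟨Int.csSup_mem ⟨r, hrx.le, hr⟩ hbdd, fun _ h => le_csSup hbdd h⟩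

lemma lastRecord_eq {r : ℤ} (hrx : r ≤ x) (hr : isRecord η r)
    (hno : ∀ z, r < z → z ≤ x → ¬ isRecord η z) : lastRecord η x = r :=
  IsGreatest.csSup_eq ⟨⟨hrx, hr⟩, fun z hz => by
    by_contra! hlt
    exact hno z hlt hz.1 hz.2⟩

lemma lastRecord_self (hx : isRecord η x) : lastRecord η x = x :=
  lastRecord_eq le_rfl hx fun _ h h' => absurd h h'.not_gt

lemma not_isRecord_of_lastRecord_lt (hbelow : ¬ BddBelow (records η)) {z : ℤ}
    (hz : lastRecord η x < z) (hzx : z ≤ x) : ¬ isRecord η z := fun h =>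
  hz.not_ge ((isGreatest_lastRecord hbelow x).2 ⟨hzx, h⟩)

lemma lastRecord_sub_one (hbelow : ¬ BddBelow (records η)) (hx : ¬ isRecord η x) :
    lastRecord η (x - 1) = lastRecord η x := by
  obtain ⟨⟨hle, hr⟩, -⟩ := isGreatest_lastRecord hbelow x
  have hne : lastRecord η x ≠ x := fun h => hx (h ▸ hr)
  exact lastRecord_eq (by omega) hr fun z hz hzx =>
    not_isRecord_of_lastRecord_lt hbelow hz (by omega)

lemma IsLift.runMin_eq (h : IsLift η ξ) (hbelow : ¬ BddBelow (records η)) (x : ℤ) :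
    runMin ξ x = ξ (lastRecord η x) := by
  obtain ⟨⟨hle, hr⟩, -⟩ := isGreatest_lastRecord hbelow x
  refine IsLeast.csInf_eq ⟨⟨_, hle, rfl⟩, ?_⟩
  rintro _ ⟨z, hz, rfl⟩
  exact h.apply_record_le hr (fun _ => not_isRecord_of_lastRecord_lt hbelow) hz

lemma IsLift.runMin_sub_one (h : IsLift η ξ) (hx : isRecord η x) :
    runMin ξ (x - 1) = ξ x + 1 := by
  have hstep := h x
  rw [hx.eq_false] at hstep
  refine IsLeast.csInf_eq ⟨⟨x - 1, Set.self_mem_Iic, by simp [valZ] at hstep; omega⟩, ?_⟩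
  rintro _ ⟨z, hz, rfl⟩
  exact h.isRecord_iff.1 hx z (by rw [Set.mem_Iic] at hz; omega)

lemma IsLift.bbsT (h : IsLift η ξ) (hbelow : ¬ BddBelow (records η)) :
    IsLift (bbsT η) (liftT ξ) := by
  intro x
  have hstep := h x
  by_cases hx : isRecord η x
  · rw [hx.eq_false] at hstep
    simp only [liftT, h.runMin_sub_one hx, h.runMin_eq hbelow x, lastRecord_self hx, _root_.bbsT,
      if_pos hx]
    simp only [valZ, Bool.false_eq_true, if_false] at hstep ⊢
    omega
  · simp only [liftT, h.runMin_eq hbelow, lastRecord_sub_one hbelow hx, _root_.bbsT, if_neg hx,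
      valZ_not]
    omega

lemma IsLift.not_bddAbove_records (h : IsLift η ξ) (hbelow : ¬ BddBelow (records η))
    (hξ : ∀ B, ∃ x, ξ x < B) : ¬ BddAbove (records η) := by
  rintro ⟨X, hX⟩
  obtain ⟨z, hz⟩ := hξ (ξ (lastRecord η X))
  obtain ⟨⟨-, hr⟩, -⟩ := isGreatest_lastRecord hbelow X
  refine hz.not_ge (h.apply_record_le hr (x := max X z) (fun u hu _ hu' => ?_) (le_max_right _ _))
  exact not_isRecord_of_lastRecord_lt hbelow hu (hX hu') hu'

lemma not_bddAbove_records_bbsT (hbelow : ¬ BddBelow (records η))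
    (habove : ¬ BddAbove (records η)) (hT : ¬ BddBelow (records (bbsT η))) :
    ¬ BddAbove (records (bbsT η)) := by
  have h := isLift_xi0 η
  refine (h.bbsT hbelow).not_bddAbove_records hT fun B => ?_
  obtain ⟨x, hx⟩ := h.exists_apply_lt habove B
  obtain ⟨⟨-, hr⟩, -⟩ := isGreatest_lastRecord hbelow x
  refine ⟨x, lt_of_le_of_lt ?_ hx⟩
  have := h.apply_record_le hr (fun _ => not_isRecord_of_lastRecord_lt hbelow) le_rfl
  rw [liftT, h.runMin_eq hbelow]
  omega

end lastRecord

lemma exists_consecutiveRecords {η : Cfg} (hbelow : ¬ BddBelow (records η))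
    (habove : ¬ BddAbove (records η)) {x : ℤ} (hx : ¬ isRecord η x) :
    ∃ y₁ y₂, ConsecutiveRecords η y₁ y₂ ∧ y₁ < x ∧ x < y₂ := by
  obtain ⟨⟨hle, hr⟩, -⟩ := isGreatest_lastRecord hbelow x
  have hlt : lastRecord η x < x := hle.lt_of_ne fun h => hx (h ▸ hr)
  obtain ⟨r, hr', hxr⟩ := not_bddAbove_iff.1 habove x
  obtain ⟨y₂, ⟨hxy₂, hy₂⟩, hleast⟩ := Int.exists_least_of_bdd
    (P := fun z => x < z ∧ isRecord η z) ⟨x, fun z hz => hz.1.le⟩ ⟨r, hxr, hr'⟩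
  refine ⟨_, y₂, ⟨hlt.trans hxy₂, hr, hy₂, fun z hz hzy₂ hz' => ?_⟩, hlt, hxy₂⟩
  rcases le_or_gt z x with hzx | hxz
  · exact not_isRecord_of_lastRecord_lt hbelow hz hzx hz'
  · exact hzy₂.not_ge (hleast z ⟨hxz, hz'⟩)

lemma ConsecutiveRecords.lastRecord_eq {η : Cfg} {y₁ y₂ x : ℤ} (h : ConsecutiveRecords η y₁ y₂)
    (h₁ : y₁ ≤ x) (h₂ : x < y₂) : lastRecord η x = y₁ :=
  _root_.lastRecord_eq h₁ h.2.1 fun z hz hzx => h.2.2.2 z hz (by omega)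

/-! ### Excursion words -/

section excursionWord

variable {η : Cfg} {y m : ℤ}

lemma excursionWord_eq_map (η : Cfg) (y₁ y₂ : ℤ) : excursionWord η y₁ y₂ =
    (List.range (y₂ - y₁ - 1).toNat).map fun n : ℕ => (y₁ + 1 + (n : ℤ), η (y₁ + 1 + n)) := by
  change List.map _ ((List.range _).flatMap fun n : ℕ => [(n : ℤ)]) = _
  rw [← List.map_eq_flatMap, List.map_map]
  rfl

lemma excursionWord_self (η : Cfg) (y : ℤ) : excursionWord η y (y + 1) = [] := by
  simp [excursionWord_eq_map]

lemma excursionWord_concat (η : Cfg) (h : y < m) :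
    excursionWord η y (m + 1) = excursionWord η y m ++ [(m, η m)] := by
  have hlen : (m + 1 - y - 1).toNat = (m - y - 1).toNat + 1 := by omega
  have hm : y + 1 + ((m - y - 1).toNat : ℤ) = m := by omega
  rw [excursionWord_eq_map, excursionWord_eq_map, hlen, List.range_succ, List.map_append,
    List.map_singleton, hm]

lemma mem_excursionWord {y₁ y₂ : ℤ} {a : ℤ × Bool} :
    a ∈ excursionWord η y₁ y₂ ↔ y₁ < a.1 ∧ a.1 < y₂ ∧ a.2 = η a.1 := by
  obtain ⟨x, b⟩ := a
  simp only [excursionWord_eq_map, List.mem_map, List.mem_range, Prod.mk.injEq]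
  constructor
  · rintro ⟨n, hn, rfl, rfl⟩
    exact ⟨by omega, by omega, rfl⟩
  · rintro ⟨h₁, h₂, h₃⟩
    have hx : y₁ + 1 + ((x - y₁ - 1).toNat : ℤ) = x := by omega
    exact ⟨(x - y₁ - 1).toNat, by omega, hx, by rw [hx, h₃]⟩

lemma isChain_reaches_excursionWord (D : ℤ → ℕ) (η : Cfg) (y₁ y₂ : ℤ) :
    ((excursionWord η y₁ y₂).map Prod.fst).IsChain (Reaches D) := by
  rw [List.isChain_iff_getElem]
  intro i hi
  simp only [excursionWord_eq_map, List.getElem_map, List.getElem_range, Reaches]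
  push_cast
  exact ⟨by omega, fun z _ _ => by omega⟩

lemma eq_excursionWord_of_prefix (hym : y < m) {p : Word} (hp : p <+: excursionWord η y m) :
    ∃ m', y < m' ∧ m' ≤ m ∧ p = excursionWord η y m' := by
  induction m, hym using Int.leInduction with
  | base => exact ⟨y + 1, by omega, le_rfl, by simpa [excursionWord_self] using hp⟩
  | succ m hm ih =>
    rw [excursionWord_concat η hm, List.prefix_concat_iff, ← excursionWord_concat η hm] at hp
    rcases hp with rfl | hp
    · exact ⟨m + 1, by omega, le_rfl, rfl⟩
    · obtain ⟨m', hy, hm', rfl⟩ := ih hp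
      exact ⟨m', hy, by omega, rfl⟩

lemma IsLift.balance_excursionWord {ξ : ℤ → ℤ} (h : IsLift η ξ) (hym : y < m) :
    balance (excursionWord η y m) = ξ (m - 1) - ξ y := by
  induction m, hym using Int.leInduction with
  | base => simp [excursionWord_self, balance]
  | succ m hm ih =>
    have hstep : balance [(m, η m)] = ξ m - ξ (m - 1) := by simp [balance, h m]
    rw [excursionWord_concat η hm, balance_append, ih, hstep, add_sub_cancel_right]
    ring

lemma ConsecutiveRecords.isDyck {y₁ y₂ : ℤ} (h : ConsecutiveRecords η y₁ y₂) :
    IsDyck (excursionWord η y₁ y₂) := by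
  obtain ⟨hlt, hy₁, hy₂, hno⟩ := h
  have hξ := isLift_xi0 η
  have hle : ∀ z < y₂, xi0 η y₁ ≤ xi0 η z := fun z hz =>
    hξ.apply_record_le hy₁ (x := y₂ - 1) (fun u hu hu' => hno u hu (by omega)) (by omega)
  constructor
  · have hstep := hξ y₂
    rw [hy₂.eq_false] at hstep
    have hdrop := hξ.isRecord_iff.1 hy₂ y₁ hlt
    have hlast := hle (y₂ - 1) (by omega)
    rw [hξ.balance_excursionWord hlt]
    simp only [valZ, Bool.false_eq_true, if_false] at hstep
    omega
  · intro p hp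
    obtain ⟨m, hm, hmy, rfl⟩ := eq_excursionWord_of_prefix hlt hp
    rw [hξ.balance_excursionWord hm, sub_nonneg]
    exact hle _ (by omega)

end excursionWord

/-! ### The labels of a configuration -/

/-- The carrier just after site `x`.  It starts empty at the last record, which is justified
because excursions are Dyck words and hence leave it empty. -/
noncomputable def carrierAt (η : Cfg) (x : ℤ) : Carrier :=
  Carrier.empty.run (excursionWord η (lastRecord η x) (x + 1))

/-- The number of the seat that changes at site `x`, which is `0` exactly at records. -/
noncomputable def siteLabel (η : Cfg) (x : ℤ) : ℕ := (carrierAt η (x - 1)).seat (η x)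

/-- The labels of the sites carrying the letter `b`, the other labels being replaced by `0`. -/
noncomputable def colorLabel (η : Cfg) (b : Bool) (x : ℤ) : ℕ :=
  if η x = b then siteLabel η x else 0

/-- The solitons of `η` of all sizes, as words. -/
def solitons (η : Cfg) : Set Word :=
  {s | ∃ y₁ y₂, ConsecutiveRecords η y₁ y₂ ∧ s ∈ tsSolitons (excursionWord η y₁ y₂)}

section carrierAt

variable {η : Cfg} {x : ℤ}

lemma carrierAt_of_isRecord (hx : isRecord η x) : carrierAt η x = Carrier.empty := by
  rw [carrierAt, lastRecord_self hx, excursionWord_self, Carrier.run_nil]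

lemma carrierAt_sub_one_of_isRecord (hbelow : ¬ BddBelow (records η)) (hx : isRecord η x) :
    carrierAt η (x - 1) = Carrier.empty := by
  obtain ⟨⟨hle, hr⟩, -⟩ := isGreatest_lastRecord hbelow (x - 1)
  have hcons : ConsecutiveRecords η (lastRecord η (x - 1)) x :=
    ⟨by omega, hr, hx, fun z hz hzx => not_isRecord_of_lastRecord_lt hbelow hz (by omega)⟩
  rw [carrierAt, sub_add_cancel, hcons.isDyck.run_empty]

lemma siteLabel_of_isRecord (hbelow : ¬ BddBelow (records η)) (hx : isRecord η x) :
    siteLabel η x = 0 := by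
  rw [siteLabel, carrierAt_sub_one_of_isRecord hbelow hx, Carrier.seat_eq_zero_iff, hx.eq_false]
  exact fun _ => rfl

lemma carrierAt_eq_next (hbelow : ¬ BddBelow (records η)) (x : ℤ) :
    carrierAt η x = (carrierAt η (x - 1)).next (η x) := by
  by_cases hx : isRecord η x
  · have hseat := siteLabel_of_isRecord hbelow hx
    rw [siteLabel, carrierAt_sub_one_of_isRecord hbelow hx] at hseat
    rw [carrierAt_of_isRecord hx, carrierAt_sub_one_of_isRecord hbelow hx]
    funext j
    simp [Carrier.next, hseat]
  · obtain ⟨⟨hle, hr⟩, -⟩ := isGreatest_lastRecord hbelow x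
    have hlt : lastRecord η x < x := hle.lt_of_ne fun h => hx (h ▸ hr)
    rw [carrierAt, carrierAt, lastRecord_sub_one hbelow hx, sub_add_cancel,
      excursionWord_concat η hlt, Carrier.run_concat]

lemma ConsecutiveRecords.isLabelling {y₁ y₂ m : ℤ} (h : ConsecutiveRecords η y₁ y₂)
    (hm : y₁ < m) (hmy : m ≤ y₂) :
    Carrier.IsLabelling (siteLabel η) Carrier.empty (excursionWord η y₁ m) := by
  induction m, hm using Int.leInduction with
  | base => rw [excursionWord_self]; trivial
  | succ m hm ih =>
    rw [excursionWord_concat η hm, Carrier.isLabelling_concat]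
    refine ⟨ih (by omega), ?_⟩
    rw [siteLabel, carrierAt, h.lastRecord_eq (by omega) (by omega), sub_add_cancel]

end carrierAt

section solitons

variable {η : Cfg} {s s' : Word}

lemma isLabelledSoliton_of_mem_solitons (hs : s ∈ solitons η) :
    IsLabelledSoliton (siteLabel η) s := by
  obtain ⟨y₁, y₂, h, hs⟩ := hs
  exact h.isDyck.isLabelledSoliton_of_mem_tsAux (h.isLabelling h.1 le_rfl)
    (isChain_reaches_excursionWord _ η y₁ y₂) hs

lemma ConsecutiveRecords.flatten_tsSolitons_perm {y₁ y₂ : ℤ} (h : ConsecutiveRecords η y₁ y₂) :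
    (tsSolitons (excursionWord η y₁ y₂)).flatten.Perm (excursionWord η y₁ y₂) :=
  h.isDyck.flatten_tsAux_perm
    (nodup_of_isChain_reaches (isChain_reaches_excursionWord (siteLabel η) η y₁ y₂)) le_rfl

lemma ConsecutiveRecords.mem_excursionWord_of_mem {y₁ y₂ : ℤ} (h : ConsecutiveRecords η y₁ y₂)
    (hs : s ∈ tsSolitons (excursionWord η y₁ y₂)) {a : ℤ × Bool} (ha : a ∈ s) :
    a ∈ excursionWord η y₁ y₂ :=
  h.flatten_tsSolitons_perm.mem_iff.1 (List.mem_flatten_of_mem hs ha)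

lemma snd_eq_of_mem_solitons (hs : s ∈ solitons η) {a : ℤ × Bool} (ha : a ∈ s) :
    a.2 = η a.1 := by
  obtain ⟨y₁, y₂, h, hs⟩ := hs
  exact (mem_excursionWord.1 (h.mem_excursionWord_of_mem hs ha)).2.2

lemma exists_mem_solitons (hbelow : ¬ BddBelow (records η)) (habove : ¬ BddAbove (records η))
    {x : ℤ} (hx : ¬ isRecord η x) : ∃ s ∈ solitons η, (x, η x) ∈ s := by
  obtain ⟨y₁, y₂, h, h₁, h₂⟩ := exists_consecutiveRecords hbelow habove hx
  have hmem : (x, η x) ∈ excursionWord η y₁ y₂ := mem_excursionWord.2 ⟨h₁, h₂, rfl⟩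
  obtain ⟨s, hs, hxs⟩ := List.mem_flatten.1 (h.flatten_tsSolitons_perm.mem_iff.2 hmem)
  exact ⟨s, ⟨y₁, y₂, h, hs⟩, hxs⟩

lemma ConsecutiveRecords.eq_of_mem_inter {y₁ y₂ z₁ z₂ x : ℤ} (h : ConsecutiveRecords η y₁ y₂)
    (h' : ConsecutiveRecords η z₁ z₂) (hy₁ : y₁ < x) (hy₂ : x < y₂) (hz₁ : z₁ < x)
    (hz₂ : x < z₂) : y₁ = z₁ ∧ y₂ = z₂ := by
  refine ⟨(h.lastRecord_eq hy₁.le hy₂).symm.trans (h'.lastRecord_eq hz₁.le hz₂), ?_⟩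
  rcases lt_trichotomy y₂ z₂ with hlt | heq | hlt
  · exact absurd h.2.2.1 (h'.2.2.2 y₂ (by omega) hlt)
  · exact heq
  · exact absurd h'.2.2.1 (h.2.2.2 z₂ (by omega) hlt)

lemma eq_of_mem_solitons (hs : s ∈ solitons η) (hs' : s' ∈ solitons η) {a : ℤ × Bool}
    (ha : a ∈ s) (ha' : a ∈ s') : s = s' := by
  obtain ⟨y₁, y₂, h, hs⟩ := hs
  obtain ⟨z₁, z₂, h', hs'⟩ := hs'
  obtain ⟨hy₁, hy₂, -⟩ := mem_excursionWord.1 (h.mem_excursionWord_of_mem hs ha)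
  obtain ⟨hz₁, hz₂, -⟩ := mem_excursionWord.1 (h'.mem_excursionWord_of_mem hs' ha')
  obtain ⟨rfl, rfl⟩ := h.eq_of_mem_inter h' hy₁ hy₂ hz₁ hz₂
  have hnodup : (tsSolitons (excursionWord η y₁ y₂)).flatten.Nodup :=
    h.flatten_tsSolitons_perm.nodup_iff.2
      (nodup_of_isChain_reaches (isChain_reaches_excursionWord (siteLabel η) η y₁ y₂)).of_map
  have : Std.Symm (List.Disjoint (α := ℤ × Bool)) := ⟨fun _ _ h => h.symm⟩
  by_contra hne
  exact (List.nodup_flatten.1 hnodup).2.forall hs hs' hne ha ha'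

lemma colorLabel_eq_zero_of_isRecord (hbelow : ¬ BddBelow (records η)) {x : ℤ}
    (hx : isRecord η x) (b : Bool) : colorLabel η b x = 0 := by
  simp [colorLabel, siteLabel_of_isRecord hbelow hx]

lemma isLabelChain_colorSites (hs : s ∈ solitons η) (b : Bool) :
    IsLabelChain (colorLabel η b) (colorSites b s) := by
  refine ((isLabelledSoliton_of_mem_solitons hs).isLabelChain b).of_le (fun x hx => ?_)
    fun x => ?_
  · exact if_pos (snd_eq_of_mem_solitons hs (mem_colorSites.1 hx)).symm
  · rw [colorLabel]
    split_ifs <;> simp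

lemma siteLabel_ne_zero (hbelow : ¬ BddBelow (records η)) (habove : ¬ BddAbove (records η))
    {x : ℤ} (hx : ¬ isRecord η x) : siteLabel η x ≠ 0 := by
  obtain ⟨s, hs, hxs⟩ := exists_mem_solitons hbelow habove hx
  have hmem := List.mem_map_of_mem (f := siteLabel η) (mem_colorSites.2 hxs)
  rw [((isLabelledSoliton_of_mem_solitons hs).isLabelChain (η x)).1, List.mem_range'_1] at hmem
  omega

theorem mem_colorSites_image_solitons_iff (hbelow : ¬ BddBelow (records η))
    (habove : ¬ BddAbove (records η)) (b : Bool) (l : List ℤ) :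
    l ∈ colorSites b '' solitons η ↔ IsMaximalLabelChain (colorLabel η b) l := by
  refine mem_iff_isMaximalLabelChain ?nonempty ?chain ?disjoint ?cover l
  case nonempty =>
    rintro _ ⟨s, hs, rfl⟩ hnil
    have hs := isLabelledSoliton_of_mem_solitons hs
    exact hs.ne_nil (List.length_eq_zero_iff.1 (by rw [hs.length_eq b, hnil]; rfl))
  case chain =>
    rintro _ ⟨s, hs, rfl⟩
    exact isLabelChain_colorSites hs b
  case disjoint =>
    rintro _ ⟨s, hs, rfl⟩ _ ⟨s', hs', rfl⟩ x hx hx'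
    rw [eq_of_mem_solitons hs hs' (mem_colorSites.1 hx) (mem_colorSites.1 hx')]
  case cover =>
    intro x hx
    obtain ⟨s, hs, hxs⟩ := exists_mem_solitons hbelow habove
      (mt (fun h => colorLabel_eq_zero_of_isRecord hbelow h b) hx)
    have hb : η x = b := by
      by_contra hb
      exact hx (if_neg hb)
    exact ⟨_, ⟨s, hs, rfl⟩, mem_colorSites.2 (hb ▸ hxs)⟩

lemma filter_toFinset_of_mem_solitons (hs : s ∈ solitons η) (b : Bool) :
    ((s.map Prod.fst).toFinset.filter fun x => η x = b) = (colorSites b s).toFinset := by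
  ext x
  simp only [Finset.mem_filter, List.mem_toFinset, List.mem_map, mem_colorSites]
  constructor
  · rintro ⟨⟨⟨x, c⟩, hxs, rfl⟩, rfl⟩
    rwa [← snd_eq_of_mem_solitons hs hxs]
  · intro hxs
    exact ⟨⟨_, hxs, rfl⟩, (snd_eq_of_mem_solitons hs hxs).symm⟩

theorem exists_mem_Gamma_filter_eq_iff (hbelow : ¬ BddBelow (records η))
    (habove : ¬ BddAbove (records η)) (b : Bool) (k : ℕ) (A : Finset ℤ) :
    (∃ γ ∈ Gamma η k, (γ.filter fun x => η x = b) = A) ↔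
      ∃ l, IsMaximalLabelChain (colorLabel η b) l ∧ l.length = k ∧ l.toFinset = A := by
  simp only [← mem_colorSites_image_solitons_iff hbelow habove, Set.exists_mem_image]
  constructor
  · rintro ⟨_, ⟨y₁, y₂, hlt, hy₁, hy₂, hno, s, hs, hlen, rfl⟩, rfl⟩
    have hs : s ∈ solitons η := ⟨y₁, y₂, ⟨hlt, hy₁, hy₂, hno⟩, hs⟩
    have hcolor := (isLabelledSoliton_of_mem_solitons hs).length_eq b
    exact ⟨s, hs, by omega, (filter_toFinset_of_mem_solitons hs b).symm⟩
  · rintro ⟨s, hs, hlen, rfl⟩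
    have hcolor := (isLabelledSoliton_of_mem_solitons hs).length_eq b
    refine ⟨_, ?_, filter_toFinset_of_mem_solitons hs b⟩
    obtain ⟨y₁, y₂, ⟨hlt, hy₁, hy₂, hno⟩, hs⟩ := hs
    exact ⟨y₁, y₂, hlt, hy₁, hy₂, hno, s, hs, by omega, rfl⟩

end solitons

/-! ### Coupling the carriers of `η` and `Tη` -/

/-- Up to the last occupied seat of `S`, the carrier `S'` is the complement of `S`.  The carriers of
`η` and `Tη` are related in this way. -/
def Coupled (S S' : Carrier) : Prop := ∀ i j, i ≤ j → S j = true → S' i = !S i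

namespace Coupled

variable {S S' : Carrier}

lemma empty (S' : Carrier) : Coupled Carrier.empty S' := fun _ _ _ hj => nomatch hj

lemma seat_eq (h : Coupled S S') (hne : S.seat false ≠ 0) : S'.seat true = S.seat false := by
  obtain ⟨m, hm⟩ := Nat.exists_eq_succ_of_ne_zero hne
  obtain ⟨hSm, hlt⟩ := Carrier.seat_eq_succ_iff.1 hm
  rw [hm]
  refine Carrier.seat_eq_succ_iff.2 ⟨by simp [h m m le_rfl hSm, hSm], fun j hj => ?_⟩
  rw [h j m hj.le hSm, hlt j hj, Bool.not_false]

lemma next_false (h : Coupled S S') (hne : S.seat false ≠ 0) :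
    Coupled (S.next false) (S'.next true) := by
  intro i j hij hj
  simp only [Carrier.next, h.seat_eq hne] at hj ⊢
  have := h i j hij
  grind

lemma next_true (h : Coupled S S') : Coupled (S.next true) (S'.next false) := by
  intro i j hij hj
  by_cases hfull : ∀ i' < i, S i' = true
  · have hfull' : ∀ i' < i, S' i' = false := fun i' hi' => by
      rw [h i' i' le_rfl (hfull i' hi'), hfull i' hi', Bool.not_true]
    rw [Carrier.next_apply_of_forall_lt hfull, Carrier.next_apply_of_forall_lt hfull',
      Bool.not_true]
  · obtain ⟨m, hm, hmin⟩ : ∃ m, (m < i ∧ S m = false) ∧ ∀ i' < m, S i' = true := by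
      classical
      push Not at hfull
      simp only [Bool.not_eq_true] at hfull
      refine ⟨Nat.find hfull, Nat.find_spec hfull, fun i' hi' => ?_⟩
      have := Nat.find_min hfull hi'
      grind
    have hseat : S.seat true = m + 1 := Carrier.seat_eq_succ_iff.2 ⟨hm.2, hmin⟩
    have hSj : S j = true := by
      rwa [Carrier.next, hseat, if_neg (by omega)] at hj
    have hseat' : S'.seat false = m + 1 := by
      refine Carrier.seat_eq_succ_iff.2 ⟨by rw [h m j (by omega) hSj, hm.2], fun i' hi' => ?_⟩
      rw [h i' j (by omega) hSj, hmin i' hi', Bool.not_true]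
    rw [Carrier.next, Carrier.next, hseat, hseat', if_neg (by omega), if_neg (by omega),
      h i j hij hSj]

end Coupled

section bbsT

variable {η : Cfg}

lemma coupled_carrierAt (hbelow : ¬ BddBelow (records η)) (habove : ¬ BddAbove (records η))
    (hT : ¬ BddBelow (records (bbsT η))) (x : ℤ) :
    Coupled (carrierAt η x) (carrierAt (bbsT η) x) := by
  obtain ⟨⟨hle, hr⟩, -⟩ := isGreatest_lastRecord hbelow x
  generalize lastRecord η x = r at hle hr
  induction x, hle using Int.leInduction with
  | base => exact carrierAt_of_isRecord hr ▸ Coupled.empty _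
  | succ x _ ih =>
    by_cases hrec : isRecord η (x + 1)
    · exact carrierAt_of_isRecord hrec ▸ Coupled.empty _
    have hne := siteLabel_ne_zero hbelow habove hrec
    rw [siteLabel, add_sub_cancel_right] at hne
    rw [carrierAt_eq_next hbelow, carrierAt_eq_next hT, bbsT, if_neg hrec, add_sub_cancel_right]
    cases hb : η (x + 1) with
    | true => exact ih.next_true
    | false => exact ih.next_false (hb ▸ hne)

lemma colorLabel_bbsT_true (hbelow : ¬ BddBelow (records η)) (habove : ¬ BddAbove (records η))
    (hT : ¬ BddBelow (records (bbsT η))) : colorLabel (bbsT η) true = colorLabel η false := by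
  funext x
  by_cases hrec : isRecord η x
  · rw [colorLabel_eq_zero_of_isRecord hbelow hrec, colorLabel, bbsT, if_pos hrec,
      if_neg Bool.false_ne_true]
  · have hbbsT : bbsT η x = !η x := if_neg hrec
    cases hb : η x with
    | true => simp [colorLabel, hbbsT, hb]
    | false =>
      have hne := siteLabel_ne_zero hbelow habove hrec
      have hcoupled := coupled_carrierAt hbelow habove hT (x - 1)
      rw [siteLabel, hb] at hne
      simp [colorLabel, siteLabel, hbbsT, hb, hcoupled.seat_eq hne]

end bbsT

theorem soliton_conservation_general (η : Cfg) (hbelow : ¬ BddBelow (records η))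
    (habove : ¬ BddAbove (records η)) (hT : ¬ BddBelow (records (bbsT η))) (k : ℕ)
    (A : Finset ℤ) :
    (∃ γ ∈ Gamma η k, tailF η γ = A) ↔ ∃ γ₁ ∈ Gamma (bbsT η) k, headF (bbsT η) γ₁ = A := by
  unfold tailF headF
  rw [exists_mem_Gamma_filter_eq_iff hbelow habove,
    exists_mem_Gamma_filter_eq_iff hT (not_bddAbove_records_bbsT hbelow habove hT),
    colorLabel_bbsT_true hbelow habove hT]

/-! ### Densities -/

section Density

variable {η : Cfg} {ξ : ℤ → ℤ}

lemma IsLift.sum_valR (h : IsLift η ξ) {a b : ℤ} (hab : a ≤ b + 1) :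
    2 * ∑ y ∈ Finset.Icc a b, valR (η y) = (ξ b : ℝ) - ξ (a - 1) + (b + 1 - a) := by
  have hvalR : ∀ c : Bool, valR c = valZ c := by intro c; cases c <;> simp [valR, valZ]
  have hcard : ((Finset.Icc a b).card : ℤ) = b + 1 - a := Int.card_Icc_of_le a b hab
  have hsum := h.sum_Icc hab
  rw [Finset.sum_sub_distrib, ← Finset.mul_sum, Finset.sum_const, nsmul_one, hcard] at hsum
  simp only [hvalR]
  exact_mod_cast sub_eq_iff_eq_add.1 hsum

lemma IsLift.tendsto_natCast_div {lam : ℝ} (h : IsLift η ξ) (hη : inXlam lam η) :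
    Tendsto (fun n : ℕ => (ξ n : ℝ) / n) atTop (nhds (2 * lam - 1)) := by
  have hlim := ((hη.2.const_mul 2).sub_const 1).add
    (tendsto_const_div_atTop_nhds_zero_nat ((ξ (-1) : ℝ) - 1))
  rw [add_zero] at hlim
  refine hlim.congr' ((eventually_ne_atTop 0).mono fun n hn => ?_)
  have hsum := h.sum_valR (a := 0) (b := n) (by omega)
  push_cast at hsum
  field_simp
  rw [hsum]
  ring_nf

lemma IsLift.tendsto_div_atBot {lam : ℝ} (h : IsLift η ξ) (hη : inXlam lam η) :
    Tendsto (fun x : ℤ => (ξ x : ℝ) / x) atBot (nhds (2 * lam - 1)) := by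
  have hlim := (((hη.1.const_mul 2).sub_const 1).sub
    (tendsto_const_div_atTop_nhds_zero_nat ((ξ 0 : ℝ) + 1))).mul (tendsto_natCast_div_add_atTop 1)
  rw [sub_zero, mul_one] at hlim
  rw [← tendsto_comp_neg_atTop_iff, ← Nat.map_cast_int_atTop, tendsto_map'_iff,
    ← tendsto_add_atTop_iff_nat 1]
  refine hlim.congr' ((eventually_ne_atTop 0).mono fun n hn => ?_)
  have hsum := h.sum_valR (a := -n) (b := 0) (by omega)
  have hneg : -((n + 1 : ℕ) : ℤ) = -n - 1 := by push_cast; ring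
  simp only [Function.comp_apply, hneg]
  push_cast at hsum ⊢
  rw [eq_div_of_mul_eq two_ne_zero ((mul_comm _ _).trans hsum), ← neg_add' (n : ℝ) 1,
    div_neg]
  field_simp
  ring

lemma tendsto_atBot_atTop_of_div {c : ℝ} (hc : c < 0)
    (hξ : Tendsto (fun x : ℤ => (ξ x : ℝ) / x) atBot (nhds c)) : Tendsto ξ atBot atTop := by
  have hmul := hξ.neg_mul_atBot hc (tendsto_intCast_atBot_iff.2 tendsto_id)
  refine tendsto_intCast_atTop_iff.1 (hmul.congr' ?_)
  filter_upwards [eventually_lt_atBot 0] with x hx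
  exact div_mul_cancel₀ _ (by exact_mod_cast hx.ne)

lemma IsLift.tendsto_liftT_atBot_atTop {c : ℝ} (h : IsLift η ξ) (hc : c < 0)
    (hξ : Tendsto (fun x : ℤ => (ξ x : ℝ) / x) atBot (nhds c)) :
    Tendsto (liftT ξ) atBot atTop := by
  have hbelow := h.not_bddBelow_records (tendsto_atBot_atTop_of_div hc hξ)
  obtain ⟨N, hN⟩ := eventually_atBot.1 ((eventually_lt_atBot 0).and
    (hξ.eventually (Ioo_mem_nhds (a := 5 / 4 * c) (b := 3 / 4 * c) (by linarith) (by linarith))))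
  have hbounds : ∀ x ≤ N, 3 / 4 * c * x ≤ ξ x ∧ (ξ x : ℝ) ≤ 5 / 4 * c * x := fun x hx => by
    obtain ⟨hx0, hlow, hhigh⟩ := hN x hx
    have hx0 : (x : ℝ) < 0 := by exact_mod_cast hx0
    exact ⟨((div_lt_iff_of_neg hx0).1 hhigh).le, ((lt_div_iff_of_neg hx0).1 hlow).le⟩
  have hlinear : Tendsto (fun x : ℤ => c / 4 * x) atBot atTop :=
    (tendsto_intCast_atBot_iff.2 tendsto_id).const_mul_atBot_of_neg (by linarith)
  refine tendsto_intCast_atTop_iff.1 (tendsto_atTop_mono' _ ?_ hlinear)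
  filter_upwards [eventually_le_atBot N] with x hx
  have hle := (isGreatest_lastRecord hbelow x).1.1
  have hmin : 3 / 4 * c * x ≤ (ξ (lastRecord η x) : ℝ) := by
    refine le_trans ?_ (hbounds _ (hle.trans hx)).1
    exact mul_le_mul_of_nonpos_left (by exact_mod_cast hle) (by linarith)
  rw [liftT, h.runMin_eq hbelow]
  push_cast
  linarith [(hbounds x hx).2]

end Density

theorem not_bddBelow_records_of_inX {η : Cfg} (hη : inX η) : ¬ BddBelow (records η) := by
  obtain ⟨lam, -, hlam, hη⟩ := hη
  have h := isLift_xi0 η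
  exact h.not_bddBelow_records (tendsto_atBot_atTop_of_div (by linarith) (h.tendsto_div_atBot hη))

theorem not_bddAbove_records_of_inX {η : Cfg} (hη : inX η) : ¬ BddAbove (records η) := by
  have hbelow := not_bddBelow_records_of_inX hη
  obtain ⟨lam, -, hlam, hη⟩ := hη
  have h := isLift_xi0 η
  have hlim := (h.tendsto_natCast_div hη).neg_mul_atTop (by linarith) tendsto_natCast_atTop_atTop
  refine h.not_bddAbove_records hbelow fun B => ?_
  obtain ⟨n, hn, hlt⟩ := ((eventually_ne_atTop 0).and (hlim.eventually_lt_atBot (B : ℝ))).exists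
  rw [div_mul_cancel₀ _ (Nat.cast_ne_zero.2 hn)] at hlt
  exact ⟨n, by exact_mod_cast hlt⟩

theorem not_bddBelow_records_bbsT_of_inX {η : Cfg} (hη : inX η) :
    ¬ BddBelow (records (bbsT η)) := by
  have hbelow := not_bddBelow_records_of_inX hη
  obtain ⟨lam, -, hlam, hη⟩ := hη
  have h := isLift_xi0 η
  exact (h.bbsT hbelow).not_bddBelow_records
    (h.tendsto_liftT_atBot_atTop (by linarith) (h.tendsto_div_atBot hη))

/-- **soliton conservation.** Let `η ∈ 𝒳`, `k ≥ 1` and `A ⊆ ℤ`.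
There is a `k`-soliton `γ ∈ Γ_k η` with tail `𝒯(γ) = A` if and only if there is
a `k`-soliton `γ¹ ∈ Γ_k(Tη)` with head `ℋ(γ¹) = A`.  In particular the box-ball
dynamics neither creates nor destroys solitons, and the tail of each `k`-soliton
of `η` becomes the head of a `k`-soliton of `Tη`. -/
theorem soliton_conservation (η : Cfg) (hη : inX η) (k : ℕ) (hk : 1 ≤ k)
    (A : Finset ℤ) :
    (∃ γ ∈ Gamma η k, tailF η γ = A) ↔
      ∃ γ1 ∈ Gamma (bbsT η) k, headF (bbsT η) γ1 = A := by
  exact soliton_conservation_general η (not_bddBelow_records_of_inX hη)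
    (not_bddAbove_records_of_inX hη) (not_bddBelow_records_bbsT_of_inX hη) k A
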